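/- Every convex pentagon in which some three consecutive interior angles sum to 360° (the Type 1 condition) admits an isohedral monohedral tiling of the plane, i.e., a monohedral tiling whose symmetry group acts transitively on the tiles. -/

import Mathlib

open EuclideanGeometry

noncomputable section

/-- The Euclidean plane. -/
abbrev Plane : Type := EuclideanSpace ℝ (Fin 2)

/-- A convex polygon with `n` vertices: `n` points of the plane in strictly convex
position, labeled in cyclic order (each segment joining cyclically consecutive
vertices lies on the boundary of the convex hull). -/
structure ConvexPolygon (n : ℕ) [NeZero n] where
  V : Fin n → Plane
  strictlyConvex : ∀ i : Fin n, V i ∉ convexHull ℝ (V '' {j | j ≠ i})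
  cyclic : ∀ i : Fin n, segment ℝ (V i) (V (i + 1)) ⊆ frontier (convexHull ℝ (Set.range V))

namespace ConvexPolygon

variable {n : ℕ} [NeZero n]

/-- The polygon, as a subset of the plane (the convex hull of its vertices). -/
def carrier (P : ConvexPolygon n) : Set Plane := convexHull ℝ (Set.range P.V)

/-- The interior angle (in radians) at the `i`-th vertex. -/
def angle (P : ConvexPolygon n) (i : Fin n) : ℝ :=
  EuclideanGeometry.angle (P.V (i - 1)) (P.V i) (P.V (i + 1))

/-- The length of the side joining the `i`-th vertex to the next one. -/
def side (P : ConvexPolygon n) (i : Fin n) : ℝ := dist (P.V i) (P.V (i + 1))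

end ConvexPolygon

/-- A convex pentagon.  Its angles `A, B, C, D, E` are `angle 0, …, angle 4` and
its sides `a, b, c, d, e` are `side 0, …, side 4`. -/
abbrev ConvexPentagon := ConvexPolygon 5

/-- `t` is an isometric copy of `P`. -/
def IsIsometricCopy (t P : Set Plane) : Prop :=
  ∃ g : Plane ≃ᵢ Plane, t = g '' P

/-- `T` is a monohedral tiling of the plane by isometric copies of `P`:
the tiles cover the plane and have pairwise disjoint interiors. -/
def IsMonohedralTiling (P : Set Plane) (T : Set (Set Plane)) : Prop :=
  (∀ t ∈ T, IsIsometricCopy t P) ∧ ⋃₀ T = Set.univ ∧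
    T.Pairwise fun t s => interior t ∩ interior s = ∅

/-- `x` is a vertex (extreme point) of the convex polygonal tile `t`. -/
def IsVertexOf (x : Plane) (t : Set Plane) : Prop := x ∈ Set.extremePoints ℝ t

/-- `e` is an edge (a full side) of the convex polygonal tile `t`: a segment
joining two distinct vertices of `t` that lies on the boundary of `t`. -/
def IsEdgeOf (e t : Set Plane) : Prop :=
  ∃ x y : Plane, x ≠ y ∧ IsVertexOf x t ∧ IsVertexOf y t ∧
    e = segment ℝ x y ∧ e ⊆ frontier t

/-- A tiling by convex polygons is edge-to-edge if any two distinct tiles meet in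
the empty set, a common vertex, or a common edge. -/
def IsEdgeToEdge (T : Set (Set Plane)) : Prop :=
  ∀ t ∈ T, ∀ s ∈ T, t ≠ s →
    t ∩ s = ∅ ∨
    (∃ x : Plane, t ∩ s = {x} ∧ IsVertexOf x t ∧ IsVertexOf x s) ∨
    (∃ e : Set Plane, t ∩ s = e ∧ IsEdgeOf e t ∧ IsEdgeOf e s)

/-- A tiling is periodic if translations by two linearly independent vectors map
every tile onto a tile. -/
def IsPeriodic (T : Set (Set Plane)) : Prop :=
  ∃ u v : Plane, LinearIndependent ℝ ![u, v] ∧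
    (∀ t ∈ T, (fun x => x + u) '' t ∈ T) ∧ (∀ t ∈ T, (fun x => x + v) '' t ∈ T)

/-- An isometry is a symmetry of the tiling `T` if it maps the tiles of `T` onto
the tiles of `T`. -/
def IsSymmetryOf (g : Plane ≃ᵢ Plane) (T : Set (Set Plane)) : Prop :=
  (fun t => g '' t) '' T = T

/-- A tiling is isohedral if its symmetry group acts transitively on the tiles. -/
def IsIsohedral (T : Set (Set Plane)) : Prop :=
  ∀ t ∈ T, ∀ s ∈ T, ∃ g : Plane ≃ᵢ Plane, IsSymmetryOf g T ∧ g '' t = s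

/-- Two tiles are equivalent if some symmetry of the tiling maps one onto the other. -/
def SymEquiv (T : Set (Set Plane)) (t s : Set Plane) : Prop :=
  ∃ g : Plane ≃ᵢ Plane, IsSymmetryOf g T ∧ g '' t = s

/-- A direct (orientation-preserving) isometry of the plane: an affine isometry
whose linear part has positive determinant. -/
def IsDirectIsometry (g : Plane ≃ᵢ Plane) : Prop :=
  ∃ (L : Plane ≃ₗᵢ[ℝ] Plane) (w : Plane),
    0 < LinearMap.det (L.toLinearEquiv : Plane →ₗ[ℝ] Plane) ∧ ∀ x, g x = L x + w

/-- Relabeling of the vertices of a pentagon: a cyclic shift by `k`, with the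
orientation reversed when `r = true`. -/
def relabel (k : Fin 5) (r : Bool) (i : Fin 5) : Fin 5 := if r then k - i else k + i

/-! ### Part 1: the tiling in coordinates -/

/-- The upper profile of the pentagon. -/
def pf (p q c t : ℝ) : ℝ := min (1 + t * ((q - 1) / p)) (c + (1 - t) * ((q - c) / (1 - p)))

/-- The quasi-periodic extension of the upper profile. -/
def ph (p q c x : ℝ) : ℝ := pf p q c (Int.fract x) + ⌊x⌋ * (c - 1)

/-- The upper boundary of the `j`-th row. -/
def pT (p q c x : ℝ) (j : ℤ) : ℝ := ph p q c (x - j * p) + j * (q + c)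

section reals
variable {p q c : ℝ}

lemma ph_add_int (x : ℝ) (k : ℤ) : ph p q c (x + k) = ph p q c x + k * (c - 1) := by
  unfold ph
  rw [Int.fract_add_intCast, Int.floor_add_intCast]; push_cast; ring

lemma ph_of_mem {x : ℝ} (h0 : 0 ≤ x) (h1 : x < 1) : ph p q c x = pf p q c x := by
  unfold ph
  rw [Int.fract_eq_self.2 ⟨h0, h1⟩, Int.floor_eq_zero_iff.2 ⟨h0, h1⟩]; simp

lemma pf_left (hp : 0 < p) (hp1 : p < 1) (hq : 1 + p * (c - 1) < q) {t : ℝ} (ht : t ≤ p) :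
    pf p q c t = 1 + t * ((q - 1) / p) := by
  unfold pf
  apply min_eq_left
  have h1 : 0 < 1 - p := by linarith
  have e1 : (q - 1) / p - (c - 1) = (q - 1 - p * (c - 1)) / p := by field_simp
  have e2 : (q - c) / (1 - p) + (c - 1) = (q - 1 - p * (c - 1)) / (1 - p) := by field_simp; ring
  have : (c + (1 - t) * ((q - c) / (1 - p))) - (1 + t * ((q - 1) / p))
      = (q - 1 - p * (c - 1)) * ((p - t) / (p * (1 - p))) := by field_simp; ring
  have h3 : 0 ≤ (q - 1 - p * (c - 1)) * ((p - t) / (p * (1 - p))) :=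
    mul_nonneg (by linarith) (div_nonneg (by linarith) (by positivity))
  linarith

lemma pf_right (hp : 0 < p) (hp1 : p < 1) (hq : 1 + p * (c - 1) < q) {t : ℝ} (ht : p ≤ t) :
    pf p q c t = c + (1 - t) * ((q - c) / (1 - p)) := by
  unfold pf
  apply min_eq_right
  have h1 : 0 < 1 - p := by linarith
  have : (1 + t * ((q - 1) / p)) - (c + (1 - t) * ((q - c) / (1 - p)))
      = (q - 1 - p * (c - 1)) * ((t - p) / (p * (1 - p))) := by field_simp; ring
  have h3 : 0 ≤ (q - 1 - p * (c - 1)) * ((t - p) / (p * (1 - p))) :=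
    mul_nonneg (by linarith) (div_nonneg (by linarith) (by positivity))
  linarith

lemma pf_lower (hp : 0 < p) (hp1 : p < 1) (hq : 1 + p * (c - 1) < q) {t : ℝ}
    (h0 : 0 ≤ t) (h1 : t ≤ 1) : 1 + t * (c - 1) ≤ pf p q c t := by
  have h1' : 0 < 1 - p := by linarith
  unfold pf
  apply le_min
  · have : c - 1 ≤ (q - 1) / p := by rw [le_div_iff₀ hp]; linarith
    have := mul_le_mul_of_nonneg_left this h0
    linarith
  · have : -(c - 1) ≤ (q - c) / (1 - p) := by rw [le_div_iff₀ h1']; nlinarith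
    have := mul_le_mul_of_nonneg_left this (sub_nonneg.2 h1)
    linarith

lemma pf_pos (hp : 0 < p) (hp1 : p < 1) (hc : 0 < c) (hq : 1 + p * (c - 1) < q) {t : ℝ}
    (h0 : 0 ≤ t) (h1 : t ≤ 1) : 0 < pf p q c t := by
  have := pf_lower hp hp1 hq h0 h1
  rcases h0.eq_or_lt with h | h
  · subst h; linarith
  · nlinarith

lemma ph_shift (hp : 0 < p) (hp1 : p < 1) (hq : 1 + p * (c - 1) < q) {x : ℝ}
    (h0 : 0 ≤ x) (h1 : x < 1) : ph p q c (x + p) - (q + c) = - pf p q c (1 - x) := by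
  have h1' : 0 < 1 - p := by linarith
  rcases lt_or_ge (x + p) 1 with h | h
  · rw [ph_of_mem (by linarith) h, pf_right hp hp1 hq (by linarith),
      pf_right hp hp1 hq (by linarith)]
    field_simp; ring
  · have : x + p = (x + p - 1) + ((1 : ℤ) : ℝ) := by push_cast; ring
    rw [this, ph_add_int, ph_of_mem (by linarith) (by linarith), pf_left hp hp1 hq (by linarith),
      pf_left hp hp1 hq (by linarith)]
    push_cast
    field_simp; ring

lemma pT_zero {x : ℝ} (h0 : 0 ≤ x) (h1 : x < 1) : pT p q c x 0 = pf p q c x := by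
  unfold pT; rw [← ph_of_mem h0 h1]; simp

lemma pT_neg_one (hp : 0 < p) (hp1 : p < 1) (hq : 1 + p * (c - 1) < q) {x : ℝ}
    (h0 : 0 ≤ x) (h1 : x < 1) : pT p q c x (-1) = - pf p q c (1 - x) := by
  unfold pT; rw [← ph_shift hp hp1 hq h0 h1]; push_cast; rw [show x - -1 * p = x + p by ring]; ring

lemma pT_lattice (x : ℝ) (i j k : ℤ) :
    pT p q c (x + j * p + k) i = pT p q c x (i - j) + j * (q + c) + k * (c - 1) := by
  unfold pT
  rw [show x + j * p + k - i * p = (x - ((i - j : ℤ) : ℝ) * p) + k by push_cast; ring, ph_add_int]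
  push_cast; ring

lemma pT_mono (hp : 0 < p) (hp1 : p < 1) (hc : 0 < c) (hq : 1 + p * (c - 1) < q) (x : ℝ) :
    StrictMono (pT p q c x) := by
  have base : ∀ t : ℝ, 0 ≤ t → t < 1 → pT p q c t (-1) < pT p q c t 0 := by
    intro t h0 h1
    rw [pT_zero h0 h1, pT_neg_one hp hp1 hq h0 h1]
    have a := pf_pos hp hp1 hc hq h0 h1.le
    have b := pf_pos hp hp1 hc hq (t := 1 - t) (by linarith) (by linarith)
    linarith
  apply strictMono_int_of_lt_succ
  intro j
  have hb := base (Int.fract (x - (j + 1 : ℤ) * p)) (Int.fract_nonneg _) (Int.fract_lt_one _)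
  have e : x = Int.fract (x - (j + 1 : ℤ) * p) + (j + 1 : ℤ) * p + ⌊x - (j + 1 : ℤ) * p⌋ := by
    have := Int.fract_add_floor (x - (j + 1 : ℤ) * p); linarith
  rw [e, pT_lattice, pT_lattice, show j - (j + 1) = (-1 : ℤ) by ring,
    show j + 1 - (j + 1) = (0 : ℤ) by ring]
  linarith

lemma pT_exists (hp : 0 < p) (hp1 : p < 1) (hc : 0 < c) (hq : 1 + p * (c - 1) < q) (x y : ℝ) :
    ∃ j : ℤ, pT p q c x (j - 1) ≤ y ∧ y ≤ pT p q c x j := by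
  set M := 1 + |(q - 1) / p - (c - 1)| with hM
  set d := q + p + c * (1 - p) with hd
  have h1p : 0 < 1 - p := by linarith
  have hd0 : 0 < d := by nlinarith
  have lo : ∀ j : ℤ, 1 + (c - 1) * x + j * d - 0 ≤ pT p q c x j + 0 := by
    intro j
    unfold pT ph
    have h := pf_lower hp hp1 hq (Int.fract_nonneg (x - j * p)) (Int.fract_lt_one (x - j * p)).le
    have e := Int.fract_add_floor (x - j * p)
    have e2 : ((⌊x - j * p⌋ : ℤ) : ℝ) = x - j * p - Int.fract (x - j * p) := by linarith
    rw [e2]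
    nlinarith
  have hi : ∀ j : ℤ, pT p q c x j ≤ M + (c - 1) * x + j * d := by
    intro j
    unfold pT ph
    have h : pf p q c (Int.fract (x - j * p)) ≤ _ := min_le_left _ _
    have e := Int.fract_add_floor (x - j * p)
    have e2 : ((⌊x - j * p⌋ : ℤ) : ℝ) = x - j * p - Int.fract (x - j * p) := by linarith
    rw [e2]
    have h0 := Int.fract_nonneg (x - j * p)
    have h1 := (Int.fract_lt_one (x - j * p)).le
    generalize Int.fract (x - j * p) = r at *
    have a1 : r * ((q - 1) / p - (c - 1)) ≤ |(q - 1) / p - (c - 1)| := by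
      calc _ ≤ r * |(q - 1) / p - (c - 1)| := mul_le_mul_of_nonneg_left (le_abs_self _) h0
        _ ≤ 1 * |(q - 1) / p - (c - 1)| := mul_le_mul_of_nonneg_right h1 (abs_nonneg _)
        _ = _ := one_mul _
    rw [hM, hd]
    linarith
  have ex := Int.exists_greatest_of_bdd (P := fun j => pT p q c x j ≤ y) ?_ ?_
  · obtain ⟨j, hj, hj2⟩ := ex
    refine ⟨j + 1, by simpa using hj, ?_⟩
    by_contra hcon
    have := hj2 (j + 1) (not_le.1 hcon).le
    omega
  · obtain ⟨n, hn⟩ := exists_int_gt ((y - (1 + (c - 1) * x)) / d)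
    refine ⟨n, fun z hz => ?_⟩
    have := lo z
    rw [div_lt_iff₀ hd0] at hn
    have h3 : (z : ℝ) * d < n * d := by linarith
    have := lt_of_mul_lt_mul_right h3 hd0.le
    exact_mod_cast this.le
  · obtain ⟨n, hn⟩ := exists_int_lt ((y - (M + (c - 1) * x)) / d)
    refine ⟨n, ?_⟩
    have := hi n
    rw [lt_div_iff₀ hd0] at hn
    show _ ≤ _
    linarith

/-- The pentagon in coordinates. -/
def inP (p q c x y : ℝ) : Prop := 0 ≤ x ∧ x ≤ 1 ∧ 0 ≤ y ∧ y ≤ pf p q c x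

/-- The open pentagon in coordinates. -/
def inPo (p q c x y : ℝ) : Prop := 0 < x ∧ x < 1 ∧ 0 < y ∧ y < pf p q c x

/-- The open hexagon in coordinates. -/
def inHo (p q c x y : ℝ) : Prop := 0 < x ∧ x < 1 ∧ - pf p q c (1 - x) < y ∧ y < pf p q c x

lemma inPo.inHo (hp : 0 < p) (hp1 : p < 1) (hc : 0 < c) (hq : 1 + p * (c - 1) < q) {x y : ℝ}
    (h : inPo p q c x y) : inHo p q c x y := by
  obtain ⟨a, b, d, e⟩ := h
  refine ⟨a, b, ?_, e⟩
  have := pf_pos hp hp1 hc hq (t := 1 - x) (by linarith) (by linarith)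
  linarith

lemma inHo.refl {x y : ℝ} (h : inHo p q c x y) : inHo p q c (1 - x) (-y) := by
  obtain ⟨a, b, d, e⟩ := h
  refine ⟨by linarith, by linarith, ?_, by linarith⟩
  rw [show 1 - (1 - x) = x by ring]; linarith

lemma inHo_unique (hp : 0 < p) (hp1 : p < 1) (hc : 0 < c) (hq : 1 + p * (c - 1) < q) {x y : ℝ}
    (j k : ℤ) (h : inHo p q c x y)
    (h' : inHo p q c (x + j * p + k) (y + j * (q + c) + k * (c - 1))) : j = 0 ∧ k = 0 := by
  obtain ⟨a, b, d, e⟩ := h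
  obtain ⟨a', b', d', e'⟩ := h'
  rw [← pT_neg_one hp hp1 hq a.le b] at d
  rw [← pT_neg_one hp hp1 hq a'.le b', pT_lattice] at d'
  rw [← pT_zero a.le b] at e
  rw [← pT_zero a'.le b', pT_lattice] at e'
  have m := pT_mono hp hp1 hc hq x
  have h1 : (-1 : ℤ) < 0 - j := m.lt_iff_lt.1 (by linarith)
  have h2 : -1 - j < (0 : ℤ) := m.lt_iff_lt.1 (by linarith)
  have hj : j = 0 := by omega
  subst hj
  refine ⟨rfl, ?_⟩
  simp only [Int.cast_zero, zero_mul, add_zero] at a' b'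
  have h3 : (k : ℝ) < 1 := by linarith
  have h4 : (-1 : ℝ) < k := by linarith
  have h3' : k < 1 := by exact_mod_cast h3
  have h4' : -1 < k := by exact_mod_cast h4
  omega

lemma inP_cover (hp : 0 < p) (hp1 : p < 1) (hc : 0 < c) (hq : 1 + p * (c - 1) < q) (x y : ℝ) :
    ∃ j k : ℤ, inP p q c (x + j * p + k) (y + j * (q + c) + k * (c - 1)) ∨
      inP p q c (1 - x + j * p + k) (- y + j * (q + c) + k * (c - 1)) := by
  obtain ⟨j, h1, h2⟩ := pT_exists hp hp1 hc hq x y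
  set k := ⌊x - j * p⌋ with hk
  set r := Int.fract (x - j * p) with hr
  have r0 : 0 ≤ r := Int.fract_nonneg _
  have r1 : r < 1 := Int.fract_lt_one _
  have e : x = r + j * p + k := by
    have := Int.fract_add_floor (x - j * p); rw [← hk, ← hr] at this; linarith
  rw [e, pT_lattice, show j - 1 - j = (-1 : ℤ) by ring, pT_neg_one hp hp1 hq r0 r1] at h1
  rw [e, pT_lattice, sub_self, pT_zero r0 r1] at h2
  rcases le_or_gt 0 (y - j * (q + c) - k * (c - 1)) with h | h
  · refine ⟨-j, -k, Or.inl ?_⟩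
    have e1 : x + (-j : ℤ) * p + (-k : ℤ) = r := by push_cast; linarith
    have e2 : y + (-j : ℤ) * (q + c) + (-k : ℤ) * (c - 1) = y - j * (q + c) - k * (c - 1) := by
      push_cast; ring
    rw [e1, e2]
    exact ⟨r0, r1.le, h, by linarith⟩
  · refine ⟨j, k, Or.inr ?_⟩
    have e1 : 1 - x + j * p + k = 1 - r := by linarith
    rw [e1]
    exact ⟨by linarith, by linarith, by linarith, by linarith⟩

end reals
/-! ### Part 2: orbits of groups -/

lemma tiling_of_group (G : Subgroup (Plane ≃ᵢ Plane)) (S : Set Plane)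
    (hcov : ∀ z, ∃ g ∈ G, g z ∈ S)
    (hdis : ∀ g ∈ G, ∀ z ∈ interior S, g z ∈ interior S → g = 1) :
    ∃ T : Set (Set Plane), IsMonohedralTiling S T ∧ IsIsohedral T := by
  have key : ∀ (g : Plane ≃ᵢ Plane) (z : Plane), z ∈ interior (g '' S) → g⁻¹ z ∈ interior S := by
    intro g z hz
    have : g '' interior S = interior (g '' S) := g.toHomeomorph.image_interior S
    rw [← this] at hz
    obtain ⟨w, hw, rfl⟩ := hz
    have : g⁻¹ (g w) = w := g.symm_apply_apply w
    rwa [this]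
  refine ⟨{t | ∃ g ∈ G, t = g '' S}, ⟨?_, ?_, ?_⟩, ?_⟩
  · rintro t ⟨g, -, rfl⟩; exact ⟨g, rfl⟩
  · rw [Set.eq_univ_iff_forall]
    intro z
    obtain ⟨g, hg, hz⟩ := hcov z
    exact ⟨_, ⟨g⁻¹, G.inv_mem hg, rfl⟩, g z, hz, g.symm_apply_apply z⟩
  · rintro t ⟨g, hg, rfl⟩ s ⟨h, hh, rfl⟩ hne
    rw [Set.eq_empty_iff_forall_notMem]
    rintro z ⟨hz1, hz2⟩
    apply hne
    have a := key g z hz1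
    have b := key h z hz2
    have := hdis (h⁻¹ * g) (G.mul_mem (G.inv_mem hh) hg) _ a (by
      have : (h⁻¹ * g) (g⁻¹ z) = h⁻¹ z := by
        show h⁻¹ (g (g⁻¹ z)) = _
        congr 1
        exact g.apply_symm_apply z
      rwa [this])
    have : g = h := by
      rw [inv_mul_eq_one] at this; exact this.symm
    rw [this]
  · rintro t ⟨g, hg, rfl⟩ s ⟨h, hh, rfl⟩
    have im : ∀ a b : Plane ≃ᵢ Plane, a '' (b '' S) = (a * b) '' S := by
      intro a b; rw [← Set.image_comp]; rfl
    refine ⟨h * g⁻¹, ?_, ?_⟩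
    · unfold IsSymmetryOf
      ext t
      constructor
      · rintro ⟨_, ⟨a, ha, rfl⟩, rfl⟩
        exact ⟨h * g⁻¹ * a, G.mul_mem (G.mul_mem hh (G.inv_mem hg)) ha, im _ _⟩
      · rintro ⟨a, ha, rfl⟩
        refine ⟨_, ⟨(h * g⁻¹)⁻¹ * a,
          G.mul_mem (G.inv_mem (G.mul_mem hh (G.inv_mem hg))) ha, rfl⟩, ?_⟩
        show _ '' (_ '' _) = _
        rw [im, mul_inv_cancel_left]
    · rw [im, inv_mul_cancel_right]

/-- The group generated by a lattice of translations and a point reflection. -/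
def pgroup (L : AddSubgroup Plane) (o : Plane) : Subgroup (Plane ≃ᵢ Plane) where
  carrier := {g | ∃ l ∈ L, (∀ z, g z = z + l) ∨ (∀ z, g z = o + l - z)}
  one_mem' := ⟨0, L.zero_mem, Or.inl fun z => by simp⟩
  mul_mem' := by
    rintro a b ⟨l, hl, h | h⟩ ⟨m, hm, h' | h'⟩
    · exact ⟨m + l, L.add_mem hm hl, Or.inl fun z => by
        show a (b z) = _
        rw [h, h']; abel⟩
    · exact ⟨m + l, L.add_mem hm hl, Or.inr fun z => by
        show a (b z) = _
        rw [h, h']; abel⟩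
    · exact ⟨l - m, L.sub_mem hl hm, Or.inr fun z => by
        show a (b z) = _
        rw [h, h']; abel⟩
    · exact ⟨l - m, L.sub_mem hl hm, Or.inl fun z => by
        show a (b z) = _
        rw [h, h']; abel⟩
  inv_mem' := by
    rintro a ⟨l, hl, h | h⟩
    · exact ⟨-l, L.neg_mem hl, Or.inl fun z => by
        apply a.injective
        have : a (a⁻¹ z) = z := a.apply_symm_apply z
        rw [this, h]; abel⟩
    · exact ⟨l, hl, Or.inr fun z => by
        apply a.injective
        have : a (a⁻¹ z) = z := a.apply_symm_apply z
        rw [this, h]; abel⟩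

lemma interior_dir {S : Set Plane} {z : Plane} (hz : z ∈ interior S) (d : Plane) :
    ∃ t : ℝ, 0 < t ∧ z + t • d ∈ S := by
  have hcont : Continuous fun t : ℝ => z + t • d := by fun_prop
  have h1 : ∀ᶠ t in nhds (0 : ℝ), z + t • d ∈ S := by
    apply hcont.continuousAt.eventually
    simpa using mem_interior_iff_mem_nhds.1 hz
  have h2 : ∀ᶠ t in nhdsWithin (0 : ℝ) (Set.Ioi 0), z + t • d ∈ S := h1.filter_mono nhdsWithin_le_nhds
  obtain ⟨t, ht, ht'⟩ := (h2.and self_mem_nhdsWithin).exists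
  exact ⟨t, ht', ht⟩

/-- Abstract tiling lemma in oblique coordinates. -/
lemma tiling_of_coords {p q c : ℝ} (hp : 0 < p) (hp1 : p < 1) (hc : 0 < c)
    (hq : 1 + p * (c - 1) < q) (S : Set Plane) (E u w : Plane) (X Y : Plane → ℝ)
    (hXY : ∀ z, z = E + X z • u + Y z • w)
    (hX : ∀ x y : ℝ, X (E + x • u + y • w) = x) (hY : ∀ x y : ℝ, Y (E + x • u + y • w) = y)
    (hS : ∀ z, z ∈ S ↔ inP p q c (X z) (Y z)) :
    ∃ T : Set (Set Plane), IsMonohedralTiling S T ∧ IsIsohedral T := by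
  have tr : ∀ z (a b : ℝ), X (z + (a • u + b • w)) = X z + a ∧ Y (z + (a • u + b • w)) = Y z + b := by
    intro z a b
    have : z + (a • u + b • w) = E + (X z + a) • u + (Y z + b) • w := by
      nth_rewrite 1 [hXY z]; module
    rw [this, hX, hY]; exact ⟨rfl, rfl⟩
  have rf : ∀ z (a b : ℝ), X (E + (E + u) + (a • u + b • w) - z) = 1 - X z + a ∧
      Y (E + (E + u) + (a • u + b • w) - z) = - Y z + b := by
    intro z a b
    have : E + (E + u) + (a • u + b • w) - z = E + (1 - X z + a) • u + (- Y z + b) • w := by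
      nth_rewrite 1 [hXY z]; module
    rw [this, hX, hY]; exact ⟨rfl, rfl⟩
  have hInter : ∀ z ∈ interior S, inPo p q c (X z) (Y z) := by
    intro z hz
    have dir : ∀ a b : ℝ, ∃ t : ℝ, 0 < t ∧ inP p q c (X z + t * a) (Y z + t * b) := by
      intro a b
      obtain ⟨t, ht, h⟩ := interior_dir hz (a • u + b • w)
      refine ⟨t, ht, ?_⟩
      rw [hS, show t • (a • u + b • w) = (t * a) • u + (t * b) • w by module, (tr _ _ _).1,
        (tr _ _ _).2] at h
      exact h
    obtain ⟨t1, h1, g1⟩ := dir 1 0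
    obtain ⟨t2, h2, g2⟩ := dir (-1) 0
    obtain ⟨t3, h3, g3⟩ := dir 0 1
    obtain ⟨t4, h4, g4⟩ := dir 0 (-1)
    refine ⟨by linarith [g2.1], by linarith [g1.2.1], by linarith [g4.2.2.1], ?_⟩
    have := g3.2.2.2
    rw [mul_zero, add_zero] at this
    linarith
  let L : AddSubgroup Plane := AddSubgroup.closure {p • u + (q + c) • w, u + (c - 1) • w}
  have hL : ∀ l, l ∈ L ↔ ∃ j k : ℤ,
      l = (j * p + k : ℝ) • u + (j * (q + c) + k * (c - 1) : ℝ) • w := by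
    intro l
    rw [AddSubgroup.mem_closure_pair]
    constructor
    · rintro ⟨j, k, rfl⟩
      refine ⟨j, k, ?_⟩
      simp only [← Int.cast_smul_eq_zsmul ℝ]
      module
    · rintro ⟨j, k, rfl⟩
      refine ⟨j, k, ?_⟩
      simp only [← Int.cast_smul_eq_zsmul ℝ]
      module
  apply tiling_of_group (pgroup L (E + (E + u))) S
  · intro z
    obtain ⟨j, k, h | h⟩ := inP_cover hp hp1 hc hq (X z) (Y z)
    · refine ⟨IsometryEquiv.addRight ((j * p + k : ℝ) • u + (j * (q + c) + k * (c - 1) : ℝ) • w),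
        ⟨_, (hL _).2 ⟨j, k, rfl⟩, Or.inl fun z => rfl⟩, ?_⟩
      rw [hS]
      show inP p q c
        (X (z + ((j * p + k : ℝ) • u + (j * (q + c) + k * (c - 1) : ℝ) • w)))
        (Y (z + ((j * p + k : ℝ) • u + (j * (q + c) + k * (c - 1) : ℝ) • w)))
      rw [(tr _ _ _).1, (tr _ _ _).2, ← add_assoc, ← add_assoc]
      exact h
    · refine ⟨IsometryEquiv.subLeft
        (E + (E + u) + ((j * p + k : ℝ) • u + (j * (q + c) + k * (c - 1) : ℝ) • w)),
        ⟨_, (hL _).2 ⟨j, k, rfl⟩, Or.inr fun z => rfl⟩, ?_⟩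
      rw [hS]
      show inP p q c (X (_ - z)) (Y (_ - z))
      rw [(rf _ _ _).1, (rf _ _ _).2, ← add_assoc, ← add_assoc]
      exact h
  · rintro g ⟨l, hl, hg⟩ z hz hgz
    obtain ⟨j, k, rfl⟩ := (hL _).1 hl
    have a := (hInter _ hz)
    have b := (hInter _ hgz)
    rcases hg with hg | hg
    · rw [hg, (tr _ _ _).1, (tr _ _ _).2, ← add_assoc, ← add_assoc] at b
      obtain ⟨rfl, rfl⟩ := inHo_unique hp hp1 hc hq j k (a.inHo hp hp1 hc hq) (b.inHo hp hp1 hc hq)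
      ext1 z
      rw [hg]
      simp
    · rw [hg, (rf _ _ _).1, (rf _ _ _).2, ← add_assoc, ← add_assoc] at b
      obtain ⟨rfl, rfl⟩ := inHo_unique hp hp1 hc hq j k (a.inHo hp hp1 hc hq).refl
        (b.inHo hp hp1 hc hq)
      have h1 := a.2.2.1
      have h2 := b.2.2.1
      simp at h2
      linarith
/-! ### Part 3: geometry of the pentagon -/

/-- The planar cross product. -/
def cr (x y : Plane) : ℝ := x 0 * y 1 - x 1 * y 0

lemma plane_inner (x y : Plane) : inner ℝ x y = x 0 * y 0 + x 1 * y 1 := by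
  simp [PiLp.inner_apply, Fin.sum_univ_two]; ring

lemma angle_sin_cr {s : ℝ} (hs : s ^ 2 = 1) {x y : Plane} (h : 0 < s * cr x y) :
    Real.sin (InnerProductGeometry.angle x y) * (‖x‖ * ‖y‖) = s * cr x y := by
  rw [InnerProductGeometry.sin_angle_mul_norm_mul_norm, ← Real.sqrt_sq h.le]
  congr 1
  simp only [plane_inner, cr, mul_pow, hs]
  ring

lemma angle_cos_cr (x y : Plane) :
    Real.cos (InnerProductGeometry.angle x y) * (‖x‖ * ‖y‖) = x 0 * y 0 + x 1 * y 1 := by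
  rw [InnerProductGeometry.cos_angle_mul_norm_mul_norm, plane_inner]

lemma cr_left_ne {s : ℝ} {x y : Plane} (h : 0 < s * cr x y) : x ≠ 0 := by
  rintro rfl; simp [cr] at h

lemma cr_right_ne {s : ℝ} {x y : Plane} (h : 0 < s * cr x y) : y ≠ 0 := by
  rintro rfl; simp [cr] at h

lemma sq_pos_of_ne {x : Plane} (h : x ≠ 0) : 0 < x 0 ^ 2 + x 1 ^ 2 := by
  by_contra hc
  apply h
  have h0 : x 0 = 0 := by nlinarith [sq_nonneg (x 0), sq_nonneg (x 1)]
  have h1 : x 1 = 0 := by nlinarith [sq_nonneg (x 0), sq_nonneg (x 1)]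
  ext i; fin_cases i <;> simp [h0, h1]

lemma parallel_of_angles {s : ℝ} (hs : s ^ 2 = 1) {a b c d : Plane}
    (h1 : 0 < s * cr a b) (h2 : 0 < s * cr b c) (h3 : 0 < s * cr c d)
    (h : InnerProductGeometry.angle a b + InnerProductGeometry.angle b c +
      InnerProductGeometry.angle c d = Real.pi) : ∃ r : ℝ, 0 < r ∧ d = (-r) • a := by
  have s1 := angle_sin_cr hs h1
  have s2 := angle_sin_cr hs h2
  have s3 := angle_sin_cr hs h3
  have c1 := angle_cos_cr a b
  have c2 := angle_cos_cr b c
  have c3 := angle_cos_cr c d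
  have n1 : 0 < ‖a‖ * ‖b‖ := mul_pos (norm_pos_iff.2 (cr_left_ne h1)) (norm_pos_iff.2 (cr_right_ne h1))
  have n2 : 0 < ‖b‖ * ‖c‖ := mul_pos (norm_pos_iff.2 (cr_left_ne h2)) (norm_pos_iff.2 (cr_right_ne h2))
  have n3 : 0 < ‖c‖ * ‖d‖ := mul_pos (norm_pos_iff.2 (cr_left_ne h3)) (norm_pos_iff.2 (cr_right_ne h3))
  have pa := sq_pos_of_ne (cr_left_ne h1)
  have pb := sq_pos_of_ne (cr_left_ne h2)
  have pc := sq_pos_of_ne (cr_left_ne h3)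
  generalize InnerProductGeometry.angle a b = t1 at *
  generalize InnerProductGeometry.angle b c = t2 at *
  generalize InnerProductGeometry.angle c d = t3 at *
  generalize ‖a‖ * ‖b‖ = N1 at *
  generalize ‖b‖ * ‖c‖ = N2 at *
  generalize ‖c‖ * ‖d‖ = N3 at *
  have hcos : Real.cos (t1 + t2 + t3) = -1 := by rw [h, Real.cos_pi]
  have hsin : Real.sin (t1 + t2 + t3) = 0 := by rw [h, Real.sin_pi]
  rw [Real.cos_add, Real.cos_add, Real.sin_add] at hcos
  rw [Real.sin_add, Real.cos_add, Real.sin_add] at hsin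
  have e1 : (a 0 * d 0 + a 1 * d 1) * ((b 0 ^ 2 + b 1 ^ 2) * (c 0 ^ 2 + c 1 ^ 2))
      = - (N1 * N2 * N3) := by
    have key : (a 0 * d 0 + a 1 * d 1) * ((b 0 ^ 2 + b 1 ^ 2) * (c 0 ^ 2 + c 1 ^ 2)) =
      (a 0 * b 0 + a 1 * b 1) * (b 0 * c 0 + b 1 * c 1) * (c 0 * d 0 + c 1 * d 1)
      - s ^ 2 * (cr a b * cr b c * (c 0 * d 0 + c 1 * d 1)
      + (cr a b * (b 0 * c 0 + b 1 * c 1) + (a 0 * b 0 + a 1 * b 1) * cr b c) * cr c d) := by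
      rw [hs]; simp only [cr]; ring
    rw [key]
    calc _ = (a 0 * b 0 + a 1 * b 1) * (b 0 * c 0 + b 1 * c 1) * (c 0 * d 0 + c 1 * d 1)
      - ((s * cr a b) * (s * cr b c) * (c 0 * d 0 + c 1 * d 1)
      + ((s * cr a b) * (b 0 * c 0 + b 1 * c 1) + (a 0 * b 0 + a 1 * b 1) * (s * cr b c))
        * (s * cr c d)) := by ring
      _ = _ := by
        rw [← s1, ← s2, ← s3, ← c1, ← c2, ← c3]
        linear_combination (N1 * N2 * N3) * hcos
  have e2 : s * cr a d * ((b 0 ^ 2 + b 1 ^ 2) * (c 0 ^ 2 + c 1 ^ 2)) = 0 := by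
    have key : s * cr a d * ((b 0 ^ 2 + b 1 ^ 2) * (c 0 ^ 2 + c 1 ^ 2)) =
      s * ((cr a b * (b 0 * c 0 + b 1 * c 1) + (a 0 * b 0 + a 1 * b 1) * cr b c)
        * (c 0 * d 0 + c 1 * d 1)
      + ((a 0 * b 0 + a 1 * b 1) * (b 0 * c 0 + b 1 * c 1) - s ^ 2 * (cr a b * cr b c)) * cr c d) := by
      rw [hs]; simp only [cr]; ring
    rw [key]
    calc _ = ((s * cr a b) * (b 0 * c 0 + b 1 * c 1) + (a 0 * b 0 + a 1 * b 1) * (s * cr b c))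
        * (c 0 * d 0 + c 1 * d 1)
      + ((a 0 * b 0 + a 1 * b 1) * (b 0 * c 0 + b 1 * c 1) - ((s * cr a b) * (s * cr b c)))
        * (s * cr c d) := by ring
      _ = _ := by
        rw [← s1, ← s2, ← s3, ← c1, ← c2, ← c3]
        linear_combination (N1 * N2 * N3) * hsin
  have hneg : a 0 * d 0 + a 1 * d 1 < 0 := by
    by_contra hcon
    have : 0 ≤ (a 0 * d 0 + a 1 * d 1) * ((b 0 ^ 2 + b 1 ^ 2) * (c 0 ^ 2 + c 1 ^ 2)) :=
      mul_nonneg (not_lt.1 hcon) (by positivity)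
    have : 0 < N1 * N2 * N3 := by positivity
    linarith
  have hs0 : s ≠ 0 := by rintro rfl; norm_num at hs
  have hcr : cr a d = 0 := by
    have : (b 0 ^ 2 + b 1 ^ 2) * (c 0 ^ 2 + c 1 ^ 2) ≠ 0 := by positivity
    simpa [this, hs0] using e2
  refine ⟨-(a 0 * d 0 + a 1 * d 1) / (a 0 ^ 2 + a 1 ^ 2), by
    apply div_pos _ pa; linarith, ?_⟩
  unfold cr at hcr
  ext i
  fin_cases i
  · simp; field_simp; linear_combination (-a 1) * hcr
  · simp; field_simp; linear_combination (a 0) * hcr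

lemma cr_ne_zero (P : ConvexPentagon) {i j l : Fin 5} (hij : i ≠ j) (hil : i ≠ l) (hjl : j ≠ l) :
    cr (P.V j - P.V i) (P.V l - P.V i) ≠ 0 := by
  intro h
  have nb : ∀ i j l : Fin 5, i ≠ j → j ≠ l → ¬ Wbtw ℝ (P.V i) (P.V j) (P.V l) := by
    intro i j l h1 h2 hw
    apply P.strictlyConvex j
    have : P.V j ∈ segment ℝ (P.V i) (P.V l) := mem_segment_iff_wbtw.2 hw
    refine (convex_convexHull ℝ _).segment_subset ?_ ?_ this
    · exact subset_convexHull ℝ _ ⟨i, h1, rfl⟩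
    · exact subset_convexHull ℝ _ ⟨l, h2.symm, rfl⟩
  have hne : P.V j - P.V i ≠ 0 := by
    intro h0
    apply nb i j l hij hjl
    rw [sub_eq_zero.1 h0]
    exact wbtw_self_left ℝ _ _
  have hc : Collinear ℝ {P.V i, P.V j, P.V l} := by
    rw [collinear_iff_of_mem (p₀ := P.V i) (by simp)]
    refine ⟨P.V j - P.V i, ?_⟩
    have pp := sq_pos_of_ne hne
    intro z hz
    simp only [Set.mem_insert_iff, Set.mem_singleton_iff] at hz
    rcases hz with rfl | rfl | rfl
    · exact ⟨0, by simp⟩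
    · exact ⟨1, by simp⟩
    · set e := P.V j - P.V i
      refine ⟨(e 0 * (P.V l - P.V i) 0 + e 1 * (P.V l - P.V i) 1) / (e 0 ^ 2 + e 1 ^ 2), ?_⟩
      rw [vadd_eq_add, ← sub_eq_iff_eq_add]
      set d := P.V l - P.V i
      unfold cr at h
      ext i
      fin_cases i
      · simp; field_simp; linear_combination (-e 1) * h
      · simp; field_simp; linear_combination (e 0) * h
  rcases hc.wbtw_or_wbtw_or_wbtw with h | h | h
  · exact nb _ _ _ hij hjl h
  · exact nb _ _ _ hjl hil.symm h
  · exact nb _ _ _ hil.symm hij h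

lemma cr_zero_of_collinear {a b c : Plane} (h : Collinear ℝ {a, b, c}) : cr (b - a) (c - a) = 0 := by
  rw [collinear_iff_of_mem (p₀ := a) (by simp)] at h
  obtain ⟨v, hv⟩ := h
  obtain ⟨r, hr⟩ := hv b (by simp)
  obtain ⟨t, ht⟩ := hv c (by simp)
  subst hr ht
  simp [cr]; ring

lemma interior_nonempty' (P : ConvexPentagon) :
    (interior (convexHull ℝ (Set.range P.V))).Nonempty := by
  rw [interior_convexHull_nonempty_iff_affineSpan_eq_top]
  have hi : AffineIndependent ℝ ![P.V 0, P.V 1, P.V 2] := by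
    rw [affineIndependent_iff_not_collinear_set]
    intro h
    exact cr_ne_zero P (i := 0) (j := 1) (l := 2) (by decide) (by decide) (by decide)
      (cr_zero_of_collinear h)
  have := hi.affineSpan_eq_top_iff_card_eq_finrank_add_one.2 (by simp)
  rw [eq_top_iff, ← this]
  apply affineSpan_mono
  rintro _ ⟨i, rfl⟩
  fin_cases i <;> simp

lemma support (P : ConvexPentagon) (i : Fin 5) :
    ∃ m : ℝ, ∀ j, j ≠ i → j ≠ i + 1 → 0 < m * cr (P.V (i + 1) - P.V i) (P.V j - P.V i) := by
  set S := convexHull ℝ (Set.range P.V) with hS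
  have hconv : Convex ℝ S := convex_convexHull ℝ _
  have hmem : ∀ j, P.V j ∈ S := fun j => subset_convexHull ℝ _ ⟨j, rfl⟩
  set M := midpoint ℝ (P.V i) (P.V (i + 1)) with hM
  have hMf : M ∈ frontier S := P.cyclic i (midpoint_mem_segment _ _)
  obtain ⟨f, hf⟩ := geometric_hahn_banach_open_point hconv.interior isOpen_interior
    (fun h => hMf.2 h)
  have hf' : ∀ a ∈ S, f a ≤ f M := by
    intro a ha
    have h1 : a ∈ closure (interior S) := by
      rw [hconv.closure_interior_eq_closure_of_nonempty_interior (interior_nonempty' P)]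
      exact subset_closure ha
    have h2 : closure (interior S) ⊆ {a | f a ≤ f M} :=
      closure_minimal (fun a ha => (hf a ha).le) (isClosed_le f.continuous continuous_const)
    exact h2 h1
  have fM : f M = (f (P.V i) + f (P.V (i + 1))) / 2 := by
    rw [hM, midpoint_eq_smul_add]
    simp; ring
  have hi := hf' _ (hmem i)
  have hi1 := hf' _ (hmem (i + 1))
  have e1 : f (P.V i) = f M := by linarith
  have e2 : f (P.V (i + 1)) = f M := by linarith
  set e := P.V (i + 1) - P.V i with he
  have fe : f e = 0 := by rw [he, map_sub]; linarith
  set α := f (EuclideanSpace.single 0 1)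
  set β := f (EuclideanSpace.single 1 1)
  have hfv : ∀ v : Plane, f v = v 0 * α + v 1 * β := by
    intro v
    have : v = v 0 • EuclideanSpace.single 0 1 + v 1 • EuclideanSpace.single 1 1 := by
      ext i; fin_cases i <;> simp
    nth_rewrite 1 [this]
    rw [map_add, map_smul, map_smul]; rfl
  rw [hfv] at fe
  have hkey : ∀ v : Plane, f v * (e 0 ^ 2 + e 1 ^ 2) = (β * e 0 - α * e 1) * cr e v := by
    intro v
    rw [hfv, cr]
    linear_combination (v 0 * e 0 + v 1 * e 1) * fe
  obtain ⟨z, hz⟩ := interior_nonempty' P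
  refine ⟨-(β * e 0 - α * e 1), fun j h1 h2 => ?_⟩
  have hne : i ≠ i + 1 := by simp
  have c0 : cr e (P.V j - P.V i) ≠ 0 := cr_ne_zero P hne h1.symm h2.symm
  have pe : 0 < e 0 ^ 2 + e 1 ^ 2 := by
    apply sq_pos_of_ne
    intro h
    rw [h] at c0
    simp [cr] at c0
  have m0 : β * e 0 - α * e 1 ≠ 0 := by
    intro h
    have h3 := hkey (z - M)
    rw [h, zero_mul] at h3
    have h4 : f (z - M) = 0 := by
      rcases mul_eq_zero.1 h3 with h | h
      · exact h
      · linarith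
    rw [map_sub] at h4
    have := hf z hz
    linarith
  have h5 := hkey (P.V j - P.V i)
  rw [map_sub, e1] at h5
  have h6 : (f (P.V j) - f M) * (e 0 ^ 2 + e 1 ^ 2) ≤ 0 :=
    mul_nonpos_of_nonpos_of_nonneg (by linarith [hf' _ (hmem j)]) pe.le
  have h7 := mul_ne_zero m0 c0
  rw [h5] at h6
  have := lt_of_le_of_ne h6 h7
  linarith

lemma orientation (P : ConvexPentagon) : ∃ s : ℝ, s ^ 2 = 1 ∧
    ∀ i j, j ≠ i → j ≠ i + 1 → 0 < s * cr (P.V (i + 1) - P.V i) (P.V j - P.V i) := by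
  choose m hm using support P
  have prod : ∀ i, 0 < m i * m (i + 1) := by
    intro i
    have a := hm i (i + 1 + 1) (by clear * -; decide +revert) (by clear * -; decide +revert)
    have b := hm (i + 1) i (by clear * -; decide +revert) (by clear * -; decide +revert)
    have e : cr (P.V (i + 1 + 1) - P.V (i + 1)) (P.V i - P.V (i + 1))
        = cr (P.V (i + 1) - P.V i) (P.V (i + 1 + 1) - P.V i) := by
      simp [cr]; ring
    rw [e] at b
    generalize cr (P.V (i + 1) - P.V i) (P.V (i + 1 + 1) - P.V i) = d at a b
    have h : 0 < (m i * m (i + 1)) * d ^ 2 := by nlinarith [mul_pos a b]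
    exact pos_of_mul_pos_left h (sq_nonneg d)
  have p0 := prod 0
  have p1 := prod 1
  have p2 := prod 2
  have p3 := prod 3
  simp only [Fin.isValue, zero_add, Fin.reduceAdd] at p0 p1 p2 p3
  have sg : ∀ x y : ℝ, 0 < x * y → 0 < x → 0 < y := fun x y h hx => pos_of_mul_pos_right h hx.le
  have sg' : ∀ x y : ℝ, 0 < x * y → x < 0 → y < 0 := fun x y h hx => by
    by_contra hcon
    have := mul_nonpos_of_nonpos_of_nonneg hx.le (not_lt.1 hcon)
    linarith
  rcases lt_or_ge 0 (m 0) with h | h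
  · have h1 := sg _ _ p0 h
    have h2 := sg _ _ p1 h1
    have h3 := sg _ _ p2 h2
    have h4 := sg _ _ p3 h3
    have all : ∀ i, 0 < m i := by intro i; fin_cases i <;> assumption
    refine ⟨1, by norm_num, fun i j a b => ?_⟩
    have := sg _ _ (hm i j a b) (all i)
    linarith
  · have h : m 0 < 0 := lt_of_le_of_ne h (by intro h0; rw [h0] at p0; simp at p0)
    have h1 := sg' _ _ p0 h
    have h2 := sg' _ _ p1 h1
    have h3 := sg' _ _ p2 h2
    have h4 := sg' _ _ p3 h3
    have all : ∀ i, m i < 0 := by intro i; fin_cases i <;> assumption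
    refine ⟨-1, by norm_num, fun i j a b => ?_⟩
    have := sg' _ _ (hm i j a b) (all i)
    linarith

lemma hull_eq {p q c : ℝ} (hp : 0 < p) (hp1 : p < 1) (hc : 0 < c)
    (hq : 1 + p * (c - 1) < q) (S : Set Plane) (A B C D E u w : Plane) (X Y : Plane → ℝ)
    (hS : S = convexHull ℝ {A, B, C, D, E})
    (hXY : ∀ z, z = E + X z • u + Y z • w)
    (hX : ∀ x y : ℝ, X (E + x • u + y • w) = x) (hY : ∀ x y : ℝ, Y (E + x • u + y • w) = y)
    (hA : A = E + w) (hB : B = E + p • u + q • w) (hC : C = E + u + c • w) (hD : D = E + u) (z : Plane) :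
    z ∈ S ↔ inP p q c (X z) (Y z) := by
  have h1p : 0 < 1 - p := by linarith
  have fl := fun t => pf_left (t := t) hp hp1 hq
  have fr := fun t => pf_right (t := t) hp hp1 hq
  constructor
  · intro hz
    have hconv : Convex ℝ {z | inP p q c (X z) (Y z)} := by
      intro z1 h1 z2 h2 a b ha hb hab
      have e : a • z1 + b • z2 = E + (a * X z1 + b * X z2) • u + (a * Y z1 + b * Y z2) • w := by
        nth_rewrite 1 [hXY z1, hXY z2]
        have : E = (a + b) • E := by rw [hab, one_smul]
        nth_rewrite 3 [this]
        module
      show inP _ _ _ _ _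
      rw [e, hX, hY]
      obtain ⟨a1, a2, a3, a4⟩ := h1
      obtain ⟨b1, b2, b3, b4⟩ := h2
      unfold pf at a4 b4
      rw [le_min_iff] at a4 b4
      have hb' : b = 1 - a := by linarith
      refine ⟨by positivity, ?_, by positivity, le_min ?_ ?_⟩
      · have := mul_le_mul_of_nonneg_left a2 ha
        have := mul_le_mul_of_nonneg_left b2 hb
        linarith
      · have := mul_le_mul_of_nonneg_left a4.1 ha
        have := mul_le_mul_of_nonneg_left b4.1 hb
        generalize (q - 1) / p = K at *
        subst hb'
        linarith
      · have := mul_le_mul_of_nonneg_left a4.2 ha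
        have := mul_le_mul_of_nonneg_left b4.2 hb
        generalize (q - c) / (1 - p) = K at *
        subst hb'
        linarith
    rw [hS] at hz
    refine convexHull_min ?_ hconv hz
    have f0 : pf p q c 0 = 1 := by rw [fl _ hp.le]; ring
    have f1 : pf p q c 1 = c := by rw [fr _ hp1.le]; ring
    have fp : pf p q c p = q := by rw [fl _ le_rfl]; field_simp; ring
    have q0 : 0 ≤ q := by nlinarith
    have pt : ∀ x y : ℝ, inP p q c x y → E + x • u + y • w ∈ {z | inP p q c (X z) (Y z)} := by
      intro x y h
      show inP _ _ _ _ _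
      rw [hX, hY]; exact h
    rintro v (rfl | rfl | rfl | rfl | rfl)
    · have := pt 0 1 ⟨le_rfl, zero_le_one, zero_le_one, f0.ge⟩
      rw [hA]; simpa using this
    · rw [hB]; exact pt p q ⟨hp.le, hp1.le, q0, fp.ge⟩
    · have := pt 1 c ⟨zero_le_one, le_rfl, hc.le, f1.ge⟩
      rw [hC]; simpa using this
    · have := pt 1 0 ⟨zero_le_one, le_rfl, le_rfl, by rw [f1]; exact hc.le⟩
      rw [hD]; simpa using this
    · have := pt 0 0 ⟨le_rfl, zero_le_one, le_rfl, by rw [f0]; exact zero_le_one⟩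
      simpa using this
  · rintro ⟨x0, x1, y0, y1⟩
    rw [hXY z]
    generalize X z = x at *
    generalize Y z = y at *
    have hconv : Convex ℝ S := hS ▸ convex_convexHull ℝ _
    have comb : ∀ a ∈ S, ∀ b ∈ S, ∀ t : ℝ, 0 ≤ t → t ≤ 1 → (1 - t) • a + t • b ∈ S :=
      fun a ha b hb t h0 h1 => hconv ha hb (by linarith) h0 (by ring)
    have hsub : ({A, B, C, D, E} : Set Plane) ⊆ S := hS ▸ subset_convexHull ℝ _
    have mA : A ∈ S := hsub (by simp)
    have mB : B ∈ S := hsub (by simp)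
    have mC : C ∈ S := hsub (by simp)
    have mD : D ∈ S := hsub (by simp)
    have mE : E ∈ S := hsub (by simp)
    have m0 : E + x • u ∈ S := by
      have := comb E mE D mD x x0 x1
      rw [hD] at this
      convert this using 1
      module
    have m1 : E + x • u + (pf p q c x) • w ∈ S := by
      rcases le_total x p with h | h
      · rw [fl _ h]
        obtain ⟨r, hr⟩ : ∃ r, r = x / p := ⟨_, rfl⟩
        have hx : x = r * p := by rw [hr]; field_simp
        have := comb A mA B mB r (by rw [hr]; positivity) (by rw [hr, div_le_one hp]; exact h)
        rw [hA, hB] at this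
        convert this using 1
        have : x * ((q - 1) / p) = r * (q - 1) := by rw [hx]; field_simp
        rw [this, hx]
        module
      · rw [fr _ h]
        obtain ⟨r, hr⟩ : ∃ r, r = (1 - x) / (1 - p) := ⟨_, rfl⟩
        have hx : x = 1 - r * (1 - p) := by rw [hr]; field_simp; ring
        have := comb C mC B mB r (by rw [hr]; exact div_nonneg (by linarith) h1p.le)
          (by rw [hr, div_le_one h1p]; linarith)
        rw [hC, hB] at this
        convert this using 1
        have : (1 - x) * ((q - c) / (1 - p)) = r * (q - c) := by rw [hr]; field_simp
        rw [this, hx]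
        module
    have f0 := pf_pos hp hp1 hc hq x0 x1
    have := comb _ m0 _ m1 (y / pf p q c x) (by positivity) (by rw [div_le_one f0]; exact y1)
    convert this using 1
    obtain ⟨r, hr⟩ : ∃ r, r = y / pf p q c x := ⟨_, rfl⟩
    have hy : y = r * pf p q c x := by rw [hr]; field_simp
    rw [← hr]
    nth_rewrite 1 [hy]
    module

lemma tiling_of_points (S : Set Plane) (A B C D E : Plane) (hS : S = convexHull ℝ {A, B, C, D, E})
    {s : ℝ} {c : ℝ} (hc : 0 < c) (hpar : D - C = (-c) • (A - E))
    (hEAB : 0 < s * cr (A - E) (B - E)) (hEAD : 0 < s * cr (A - E) (D - E))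
    (hCDB : 0 < s * cr (D - C) (B - C)) (hABC : 0 < s * cr (B - A) (C - A)) :
    ∃ T : Set (Set Plane), IsMonohedralTiling S T ∧ IsIsohedral T := by
  obtain ⟨u, hu⟩ : ∃ u, u = D - E := ⟨_, rfl⟩
  obtain ⟨w, hw⟩ : ∃ w, w = A - E := ⟨_, rfl⟩
  obtain ⟨k, hk⟩ : ∃ k, k = cr u w := ⟨_, rfl⟩
  have hD : D = E + u := by rw [hu]; abel
  have hA : A = E + w := by rw [hw]; abel
  have hC : C = E + u + c • w := by
    rw [← hw] at hpar
    have : C = D - (D - C) := by abel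
    rw [this, hpar, hD]; module
  have hsk : s * k < 0 := by
    rw [← hw, ← hu] at hEAD
    have : cr w u = - k := by rw [hk]; simp only [cr]; ring
    rw [this] at hEAD; linarith
  have hk0 : k ≠ 0 := by rintro rfl; simp at hsk
  let X : Plane → ℝ := fun z => cr (z - E) w / k
  let Y : Plane → ℝ := fun z => cr u (z - E) / k
  have hX : ∀ x y : ℝ, X (E + x • u + y • w) = x := by
    intro x y
    simp only [X]
    rw [div_eq_iff hk0, hk]
    simp [cr]; ring
  have hY : ∀ x y : ℝ, Y (E + x • u + y • w) = y := by
    intro x y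
    simp only [Y]
    rw [div_eq_iff hk0, hk]
    simp [cr]; ring
  have hXY : ∀ z, z = E + X z • u + Y z • w := by
    intro z
    simp only [X, Y]
    ext i
    fin_cases i
    · simp [cr]; field_simp; rw [hk, cr]; ring
    · simp [cr]; field_simp; rw [hk, cr]; ring
  obtain ⟨p, hp⟩ : ∃ p, p = X B := ⟨_, rfl⟩
  obtain ⟨q, hq⟩ : ∃ q, q = Y B := ⟨_, rfl⟩
  have hB : B = E + p • u + q • w := by rw [hp, hq]; exact hXY B
  have p0 : 0 < p := by
    have : s * cr (A - E) (B - E) = -(s * k) * p := by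
      rw [hA, hB, hk]; simp [cr]; ring
    rw [this] at hEAB
    exact pos_of_mul_pos_right hEAB (by linarith)
  have p1 : p < 1 := by
    have : s * cr (D - C) (B - C) = (-(s * k) * c) * (1 - p) := by
      rw [hC, hB, hk, hD]; simp [cr]; ring
    rw [this] at hCDB
    have := pos_of_mul_pos_right hCDB (mul_nonneg (by linarith) hc.le)
    linarith
  have q1 : 1 + p * (c - 1) < q := by
    have : s * cr (B - A) (C - A) = (-(s * k)) * (q - (1 + p * (c - 1))) := by
      rw [hC, hB, hk, hA]; simp [cr]; ring
    rw [this] at hABC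
    have := pos_of_mul_pos_right hABC (by linarith)
    linarith
  exact tiling_of_coords p0 p1 hc q1 S E u w X Y hXY hX hY
    (hull_eq p0 p1 hc q1 S A B C D E u w X Y hS hXY hX hY hA hB hC hD)

/-- every convex pentagon with three consecutive angles summing to
360° (Type 1) admits an isohedral monohedral tiling of the plane. -/
theorem statement_3 (P : ConvexPentagon)
    (h1 : ∃ k : Fin 5, P.angle k + P.angle (k + 1) + P.angle (k + 2) = 2 * Real.pi) :
    ∃ T : Set (Set Plane), IsMonohedralTiling P.carrier T ∧ IsIsohedral T := by
  obtain ⟨k, hk⟩ := h1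
  obtain ⟨s, hs, ho⟩ := orientation P
  have i1 : k + 1 + 1 = k + 2 := by clear * -; decide +revert
  have i2 : k + 2 + 1 = k + 3 := by clear * -; decide +revert
  have i3 : k + 3 + 1 = k + 4 := by clear * -; decide +revert
  have i4 : k + 4 + 1 = k := by clear * -; decide +revert
  have j1 : k + 1 - 1 = k := by clear * -; decide +revert
  have j2 : k + 2 - 1 = k + 1 := by clear * -; decide +revert
  have j0 : k - 1 = k + 4 := by clear * -; decide +revert
  have o0 := ho (k + 4) (k + 1) (by clear * -; decide +revert) (by clear * -; decide +revert)
  have o0' := ho (k + 4) (k + 3) (by clear * -; decide +revert) (by clear * -; decide +revert)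
  have o1 := ho k (k + 2) (by clear * -; decide +revert) (by clear * -; decide +revert)
  have o2 := ho (k + 1) (k + 3) (by clear * -; decide +revert) (by clear * -; decide +revert)
  have o3 := ho (k + 2) (k + 1) (by clear * -; decide +revert) (by clear * -; decide +revert)
  rw [i4] at o0 o0'
  rw [i1] at o2
  rw [i2] at o3
  simp only [ConvexPolygon.angle, j0, j1, j2, i1, i2] at hk
  have hrange : Set.range P.V = {P.V k, P.V (k + 1), P.V (k + 2), P.V (k + 3), P.V (k + 4)} := by
    have hall : ∀ i : Fin 5, i = k ∨ i = k + 1 ∨ i = k + 2 ∨ i = k + 3 ∨ i = k + 4 := by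
      clear * -; decide +revert
    ext z
    constructor
    · rintro ⟨i, rfl⟩
      rcases hall i with h | h | h | h | h <;> rw [h] <;> simp
    · rintro (rfl | rfl | rfl | rfl | rfl) <;> exact ⟨_, rfl⟩
  have hcar : P.carrier
      = convexHull ℝ {P.V k, P.V (k + 1), P.V (k + 2), P.V (k + 3), P.V (k + 4)} := by
    rw [ConvexPolygon.carrier, hrange]
  generalize P.V k = A at *
  generalize P.V (k + 1) = B at *
  generalize P.V (k + 2) = C at *
  generalize P.V (k + 3) = D at *
  generalize P.V (k + 4) = E at *
  have ang : ∀ x y z : Plane, EuclideanGeometry.angle x y z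
      = Real.pi - InnerProductGeometry.angle (y - x) (z - y) := by
    intro x y z
    rw [← InnerProductGeometry.angle_neg_left, neg_sub]; rfl
  rw [ang, ang, ang] at hk
  have c1 : cr (A - E) (B - A) = cr (A - E) (B - E) := by simp [cr]; ring
  have c2 : cr (B - A) (C - B) = cr (B - A) (C - A) := by simp [cr]; ring
  have c3 : cr (C - B) (D - C) = cr (C - B) (D - B) := by simp [cr]; ring
  obtain ⟨r, hr, hpar⟩ := parallel_of_angles hs (a := A - E) (b := B - A) (c := C - B)
    (d := D - C) (by rw [c1]; exact o0) (by rw [c2]; exact o1) (by rw [c3]; exact o2)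
    (by linarith)
  exact tiling_of_points P.carrier A B C D E hcar hr hpar o0 o0' o3 o1
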